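/- Let q be a prime power and let ν, m₁, m₂, t be positive integers with ν > m₁ ≥ t+1, ν > m₂ ≥ t+1, and 2ν ≥ m₁ + 2m₂ − t + 4. Then for every M ∈ 𝒫_{m₂+1} and every t-dimensional subspace T of M, |𝒞₁(M,T;m₁,t)|·|𝒞₂(M,T;m₂)| > ([m₂−t+1 choose 1]_q − q^{−2})·N'(t+1;m₁;2ν)·N'(t;m₂;2ν). -/

import Mathlib

open Finset Module

noncomputable section

/-- Gaussian binomial coefficient `[n choose k]_q` as a rational number. -/
def gaussBinom (q n k : ℕ) : ℚ :=
  ∏ i ∈ Finset.range k, ((q : ℚ) ^ ((n : ℤ) - i) - 1) / ((q : ℚ) ^ ((k : ℤ) - i) - 1)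

/-- `N'(a; m; 2ν)`, the number of `m`-dim totally isotropic subspaces containing
a fixed `a`-dim one. -/
def Nprime (q a m ν : ℕ) : ℚ :=
  ∏ i ∈ Finset.Icc 1 (m - a), ((q : ℚ) ^ (2 * ((ν : ℤ) - m + i)) - 1) / ((q : ℚ) ^ (i : ℤ) - 1)

variable {K V : Type*} [Field K] [AddCommGroup V] [Module K V]

/-- A subspace is totally isotropic w.r.t. the bilinear form `f`. -/
def TotallyIsotropic (f : V →ₗ[K] V →ₗ[K] K) (W : Submodule K V) : Prop :=
  ∀ x ∈ W, ∀ y ∈ W, f x y = 0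

/-- `polar f m` = `𝒫_m`, the set of `m`-dimensional totally isotropic subspaces. -/
def polar (f : V →ₗ[K] V →ₗ[K] K) (m : ℕ) : Set (Submodule K V) :=
  {W | TotallyIsotropic f W ∧ finrank K W = m}

/-- `X` is a `t`-cover of the family `ℱ`. -/
def IsTCover (f : V →ₗ[K] V →ₗ[K] K) (t : ℕ) (ℱ : Set (Submodule K V))
    (X : Submodule K V) : Prop :=
  TotallyIsotropic f X ∧ ∀ F ∈ ℱ, t ≤ finrank K ↥(X ⊓ F)

/-- `τ_t(ℱ)`, the minimum dimension of a `t`-cover of `ℱ`. -/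
def tauCover (f : V →ₗ[K] V →ₗ[K] K) (t : ℕ) (ℱ : Set (Submodule K V)) : ℕ :=
  sInf {x | ∃ X, IsTCover f t ℱ X ∧ finrank K ↥X = x}

def C1 (f : V →ₗ[K] V →ₗ[K] K) (M T : Submodule K V) (m t : ℕ) : Set (Submodule K V) :=
  {F | F ∈ polar f m ∧ T ≤ F ∧ t + 1 ≤ finrank K ↥(F ⊓ M)}

def C2 (f : V →ₗ[K] V →ₗ[K] K) (M T : Submodule K V) (m : ℕ) : Set (Submodule K V) :=
  {F | F ∈ polar f m ∧ T ≤ F} ∪ {F | F ∈ polar f m ∧ F ≤ M}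

def C3 (f : V →ₗ[K] V →ₗ[K] K) (S : Submodule K V) (m : ℕ) : Set (Submodule K V) :=
  {F | F ∈ polar f m ∧ S ≤ F}

def C4 (f : V →ₗ[K] V →ₗ[K] K) (S : Submodule K V) (m t : ℕ) : Set (Submodule K V) :=
  {F | F ∈ polar f m ∧ t ≤ finrank K ↥(F ⊓ S)}

def s0 (q ν m s t : ℕ) : ℚ :=
  gaussBinom q (s - t) 1 * Nprime q (t + 1) m ν - q * gaussBinom q (s - t) 2 * Nprime q (t + 2) m ν

/-!
Write `q = |K|` and `n = dim M - t`. Every `F ⊇ T` containing one of the `[n]_q` subspaces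
`T ⊂ S ≤ M` of dimension `t + 1` lies in `𝒞₁`. By the second Bonferroni inequality there are at
least `[n]_q N'(t+1) - ([n]_q choose 2) N'(t+2)` such `F`, since two different `S` span a subspace
of dimension `t + 2`. The recursion `N'(a) (q^(m-a) - 1) = N'(a+1) (q^(2(ν-a)) - 1)` and the
hypothesis on `ν` make the correction term smaller than `q⁻² N'(t+1)`. The family `𝒞₂` contributes
`N'(t)` through its members containing `T`.

The count `N'(a)` itself comes from double counting the incidences `v ∈ F`, where `F ⊇ A` is totally
isotropic of dimension `m` and `v ∈ Aᗮ \ A`.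
-/

section Counting

variable {α β ι R : Type*}

lemma ncard_mul_eq_ncard_mul [Semiring R] (r : α → β → Prop) {s : Set α} {t : Set β}
    (hs : s.Finite) (ht : t.Finite) {m n : R}
    (hm : ∀ a ∈ s, ({b ∈ t | r a b}.ncard : R) = m)
    (hn : ∀ b ∈ t, ({a ∈ s | r a b}.ncard : R) = n) :
    (s.ncard : R) * m = t.ncard * n := by
  classical
  lift s to Finset α using hs
  lift t to Finset β using ht
  simp only [SetLike.mem_coe, ← Finset.coe_filter, Set.ncard_coe_finset] at hm hn ⊢
  calc (#s : R) * m = ∑ a ∈ s, (#(t.bipartiteAbove r a) : R) := by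
        simp only [bipartiteAbove, Finset.sum_congr rfl hm, Finset.sum_const, nsmul_eq_mul]
    _ = ∑ b ∈ t, (#(s.bipartiteBelow r b) : R) := by
        exact_mod_cast congrArg (Nat.cast (R := R))
          (Finset.sum_card_bipartiteAbove_eq_sum_card_bipartiteBelow (s := s) (t := t) r)
    _ = #t * n := by
        simp only [bipartiteBelow, Finset.sum_congr rfl hn, Finset.sum_const, nsmul_eq_mul]

lemma ncard_inter_biUnion_le [CommRing R] [LinearOrder R] [IsStrictOrderedRing R]
    (s : Finset ι) (A : ι → Set α) (B : Set α) {N : R} (hN : ∀ i ∈ s, ((B ∩ A i).ncard : R) ≤ N) :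
    ((B ∩ ⋃ i ∈ s, A i).ncard : R) ≤ #s * N := by
  rw [Set.inter_iUnion₂]
  calc ((⋃ i ∈ s, B ∩ A i).ncard : R) ≤ ∑ i ∈ s, ((B ∩ A i).ncard : R) := by
        exact_mod_cast Finset.set_ncard_biUnion_le s fun i ↦ B ∩ A i
    _ ≤ #s * N := by simpa using Finset.sum_le_card_nsmul s _ N hN

lemma bonferroni_le_ncard_biUnion [Finite α] [CommRing R] [LinearOrder R] [IsStrictOrderedRing R]
    {s : Set ι} (hs : s.Finite) (A : ι → Set α) {N₁ N₂ : R}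
    (h₁ : ∀ i ∈ s, N₁ ≤ ((A i).ncard : R))
    (h₂ : s.Pairwise fun i j ↦ ((A i ∩ A j).ncard : R) ≤ N₂) :
    (s.ncard : R) * N₁ - (s.ncard.choose 2 : R) * N₂ ≤ ((⋃ i ∈ s, A i).ncard : R) := by
  classical
  lift s to Finset ι using hs
  simp only [SetLike.mem_coe, Set.ncard_coe_finset] at h₁ ⊢
  induction s using Finset.induction with
  | empty => simp
  | insert a s ha ih =>
    have hU := ih (h₂.mono (Finset.coe_subset.2 (Finset.subset_insert a s)))
      fun i hi ↦ h₁ i (Finset.mem_insert_of_mem hi)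
    have hA := h₁ a (Finset.mem_insert_self a s)
    have hinter : ((A a ∩ ⋃ i ∈ s, A i).ncard : R) ≤ #s * N₂ :=
      ncard_inter_biUnion_le s A (A a) fun i hi ↦
        h₂ (by simp) (by simp [hi]) (ne_of_mem_of_not_mem hi ha).symm
    have hunion : ((A a ∪ ⋃ i ∈ s, A i).ncard : R) + (A a ∩ ⋃ i ∈ s, A i).ncard =
        (A a).ncard + (⋃ i ∈ s, A i).ncard := by
      exact_mod_cast Set.ncard_union_add_ncard_inter (A a) (⋃ i ∈ s, A i)
    rw [Finset.set_biUnion_insert, Finset.card_insert_of_notMem ha, Nat.choose_succ_succ' #s 1,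
      Nat.choose_one_right]
    push_cast
    linarith

end Counting

section Numbers

variable {q : ℕ}

lemma gaussBinom_one_mul_sub_one (hq : 1 < q) (n : ℕ) :
    gaussBinom q n 1 * ((q : ℚ) - 1) = (q : ℚ) ^ n - 1 := by
  have hq' : (1 : ℚ) < q := by exact_mod_cast hq
  simp [gaussBinom, div_mul_cancel₀ _ (sub_pos.2 hq').ne']

lemma Nprime_self (q m ν : ℕ) : Nprime q m m ν = 1 := by
  simp [Nprime]

lemma Nprime_mul_pow_sub_one (hq : 1 < q) {a m ν : ℕ} (ham : a < m) (hmν : m ≤ ν) :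
    Nprime q a m ν * ((q : ℚ) ^ (m - a) - 1) =
      Nprime q (a + 1) m ν * ((q : ℚ) ^ (2 * (ν - a)) - 1) := by
  have hq' : (1 : ℚ) < q := by exact_mod_cast hq
  obtain ⟨d, rfl⟩ := Nat.exists_eq_add_of_le' ham
  obtain ⟨e, rfl⟩ := Nat.exists_eq_add_of_le' hmν
  have hden : (q : ℚ) ^ (d + 1) - 1 ≠ 0 := (sub_pos.2 (one_lt_pow₀ hq' d.succ_ne_zero)).ne'
  have hexp : 2 * (((e + (d + (a + 1)) : ℕ) : ℤ) - (d + (a + 1) : ℕ) + (d + 1 : ℕ)) =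
      (2 * (e + (d + 1)) : ℕ) := by
    push_cast
    ring
  rw [Nprime, Nprime, show d + (a + 1) - a = d + 1 by omega, Nat.add_sub_cancel,
    show e + (d + (a + 1)) - a = e + (d + 1) by omega,
    Finset.prod_Icc_succ_top (by omega), hexp, zpow_natCast, zpow_natCast, mul_assoc,
    div_mul_cancel₀ _ hden]

lemma Nprime_pos (hq : 1 < q) {m ν : ℕ} (a : ℕ) (hmν : m ≤ ν) : 0 < Nprime q a m ν := by
  have hq' : (1 : ℚ) < q := by exact_mod_cast hq
  refine Finset.prod_pos fun i hi ↦ div_pos ?_ ?_ <;> rw [Finset.mem_Icc] at hi <;>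
    exact sub_pos.2 (one_lt_zpow₀ hq' (by omega))

lemma sq_mul_gaussBinom_one_mul_lt (hq : 1 < q) {n k e : ℕ} (he : 2 * n + k + 1 ≤ e) :
    (q : ℚ) ^ 2 * (gaussBinom q n 1 * (gaussBinom q n 1 - 1)) * ((q : ℚ) ^ k - 1) <
      2 * ((q : ℚ) ^ e - 1) := by
  have hg := gaussBinom_one_mul_sub_one hq n
  set g := gaussBinom q n 1
  have hq' : (2 : ℚ) ≤ q := by exact_mod_cast hq
  have hpow_n : (1 : ℚ) ≤ (q : ℚ) ^ n := one_le_pow₀ (by linarith)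
  have hpow_k : (1 : ℚ) ≤ (q : ℚ) ^ k := one_le_pow₀ (by linarith)
  have hpow_e : (q : ℚ) ^ (2 * n + k + 1) ≤ (q : ℚ) ^ e := pow_le_pow_right₀ (by linarith) he
  have hpairs : (g * (g - 1)) * ((q : ℚ) - 1) ^ 2 ≤ ((q : ℚ) ^ n) ^ 2 := by
    calc (g * (g - 1)) * ((q : ℚ) - 1) ^ 2 = ((q : ℚ) ^ n - 1) * ((q : ℚ) ^ n - q) := by
          linear_combination (g * (q - 1) + q ^ n - q) * hg
      _ ≤ ((q : ℚ) ^ n) ^ 2 := by nlinarith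
  have hq_le : (q : ℚ) ≤ 2 * ((q : ℚ) - 1) ^ 2 := by nlinarith
  have hkey : (q : ℚ) * ((q : ℚ) ^ n) ^ 2 * ((q : ℚ) ^ k - 1) < (q : ℚ) ^ e - 1 := by
    have hone_lt : (1 : ℚ) < q * ((q : ℚ) ^ n) ^ 2 := by nlinarith
    calc (q : ℚ) * ((q : ℚ) ^ n) ^ 2 * ((q : ℚ) ^ k - 1)
        = (q : ℚ) ^ (2 * n + k + 1) - q * ((q : ℚ) ^ n) ^ 2 := by ring
      _ < (q : ℚ) ^ e - 1 := by linarith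
  have hsq : 0 < ((q : ℚ) - 1) ^ 2 := by nlinarith
  refine lt_of_mul_lt_mul_right ?_ hsq.le
  calc (q : ℚ) ^ 2 * (g * (g - 1)) * ((q : ℚ) ^ k - 1) * ((q : ℚ) - 1) ^ 2
      = (q : ℚ) ^ 2 * ((q : ℚ) ^ k - 1) * (g * (g - 1) * ((q : ℚ) - 1) ^ 2) := by ring
    _ ≤ (q : ℚ) ^ 2 * ((q : ℚ) ^ k - 1) * ((q : ℚ) ^ n) ^ 2 :=
        mul_le_mul_of_nonneg_left hpairs (mul_nonneg (by positivity) (by linarith))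
    _ = q * (q * ((q : ℚ) ^ n) ^ 2 * ((q : ℚ) ^ k - 1)) := by ring
    _ < q * ((q : ℚ) ^ e - 1) := mul_lt_mul_of_pos_left hkey (by linarith)
    _ ≤ 2 * ((q : ℚ) - 1) ^ 2 * ((q : ℚ) ^ e - 1) :=
        mul_le_mul_of_nonneg_right hq_le (sub_nonneg.2 (one_le_pow₀ (by linarith)))
    _ = 2 * ((q : ℚ) ^ e - 1) * ((q : ℚ) - 1) ^ 2 := by ring

lemma gaussBinom_one_mul_div_two_lt (hq : 1 < q) {n k e : ℕ} (he : 2 * n + k + 1 ≤ e) :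
    gaussBinom q n 1 * (gaussBinom q n 1 - 1) / 2 * (((q : ℚ) ^ k - 1) / ((q : ℚ) ^ e - 1)) <
      (q : ℚ) ^ (-2 : ℤ) := by
  have hsq : (0 : ℚ) < (q : ℚ) ^ 2 := by positivity
  have hden : (0 : ℚ) < (q : ℚ) ^ e - 1 :=
    sub_pos.2 (one_lt_pow₀ (by exact_mod_cast hq) (by omega))
  rw [zpow_neg, zpow_ofNat, mul_div_assoc', div_lt_iff₀ hden, lt_inv_mul_iff₀ hsq]
  linarith [sq_mul_gaussBinom_one_mul_lt hq he]

end Numbers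

section Subspaces

/-- The subspaces of `M` covering `T`, i.e. the points of the projective space of `M / T`. -/
def coversIn (T M : Submodule K V) : Set (Submodule K V) :=
  {S | T ≤ S ∧ S ≤ M ∧ finrank K S = finrank K T + 1}

lemma finrank_sup_of_ne [FiniteDimensional K V] {T S S' : Submodule K V} (hTS : T ≤ S)
    (hTS' : T ≤ S') (hS : finrank K S = finrank K T + 1) (hS' : finrank K S' = finrank K T + 1)
    (hne : S ≠ S') : finrank K ↥(S ⊔ S') = finrank K T + 2 := by
  have hsum := Submodule.finrank_sup_add_finrank_inf_eq S S'
  have hge : finrank K T ≤ finrank K ↥(S ⊓ S') := Submodule.finrank_mono (le_inf hTS hTS')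
  have hlt : finrank K ↥(S ⊓ S') < finrank K S := by
    refine Submodule.finrank_lt_finrank_of_lt (inf_le_left.lt_of_ne fun heq ↦ hne ?_)
    exact Submodule.eq_of_le_of_finrank_eq (inf_eq_left.1 heq) (hS.trans hS'.symm)
  omega

variable [Finite V]

lemma ncard_sdiff_submodule {A W : Submodule K V} (hAW : A ≤ W) {e : ℕ}
    (hW : finrank K W = finrank K A + e) :
    (((W : Set V) \ A).ncard : ℚ) =
      (Nat.card K : ℚ) ^ finrank K A * ((Nat.card K : ℚ) ^ e - 1) := by
  have hcard (U : Submodule K V) : (U : Set V).ncard = Nat.card K ^ finrank K U :=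
    Module.natCard_eq_pow_finrank
  have hadd : (((W : Set V) \ A).ncard : ℚ) + (A : Set V).ncard = (W : Set V).ncard := by
    exact_mod_cast Set.ncard_sdiff_add_ncard_of_subset (SetLike.coe_subset_coe.2 hAW)
  rw [hcard, hcard, hW] at hadd
  push_cast at hadd
  linear_combination hadd

variable [Finite K]

lemma ncard_mul_pow_sub_one {A W : Submodule K V} (hAW : A ≤ W) {d e : ℕ} {c : ℚ}
    {𝒮 : Set (Submodule K V)} (hW : finrank K W = finrank K A + e)
    (h𝒮 : ∀ F ∈ 𝒮, A ≤ F ∧ F ≤ W ∧ finrank K F = finrank K A + d)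
    (hc : ∀ v ∈ W, v ∉ A → ({F ∈ 𝒮 | v ∈ F}.ncard : ℚ) = c) :
    (𝒮.ncard : ℚ) * ((Nat.card K : ℚ) ^ d - 1) = ((Nat.card K : ℚ) ^ e - 1) * c := by
  have hmem : ∀ F ∈ 𝒮, ({v ∈ (W : Set V) \ A | v ∈ F}.ncard : ℚ) =
      (Nat.card K : ℚ) ^ finrank K A * ((Nat.card K : ℚ) ^ d - 1) := by
    intro F hF
    obtain ⟨hAF, hFW, hFd⟩ := h𝒮 F hF
    rw [← ncard_sdiff_submodule hAF hFd]
    congr 2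
    ext v
    exact ⟨fun h ↦ ⟨h.2, h.1.2⟩, fun h ↦ ⟨⟨hFW h.1, h.2⟩, h.1⟩⟩
  have hcount := ncard_mul_eq_ncard_mul (fun (F : Submodule K V) v ↦ v ∈ F) 𝒮.toFinite
    (Set.toFinite _) hmem fun v hv ↦ hc v hv.1 hv.2
  rw [ncard_sdiff_submodule hAW hW] at hcount
  have hpow : (Nat.card K : ℚ) ^ finrank K A ≠ 0 := by simp [Nat.card_pos.ne']
  apply mul_left_cancel₀ hpow
  linear_combination hcount

lemma ncard_coversIn {T M : Submodule K V} (hTM : T ≤ M) {n : ℕ}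
    (hM : finrank K M = finrank K T + n) :
    ((coversIn T M).ncard : ℚ) = gaussBinom (Nat.card K) n 1 := by
  have hq : 1 < Nat.card K := Finite.one_lt_card
  have hunique : ∀ v ∈ M, v ∉ T → ({S ∈ coversIn T M | v ∈ S}.ncard : ℚ) = 1 := by
    intro v hvM hvT
    rw [Nat.cast_eq_one, Set.ncard_eq_one]
    refine ⟨T ⊔ K ∙ v, Set.eq_singleton_iff_unique_mem.2 ⟨⟨⟨le_sup_left, ?_, ?_⟩, ?_⟩, ?_⟩⟩
    · exact sup_le hTM ((Submodule.span_singleton_le_iff_mem v M).2 hvM)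
    · exact Submodule.finrank_sup_span_singleton hvT
    · exact Submodule.mem_sup_right (Submodule.mem_span_singleton_self v)
    · rintro S ⟨⟨hTS, -, hS⟩, hvS⟩
      refine (Submodule.eq_of_le_of_finrank_eq
        (sup_le hTS ((Submodule.span_singleton_le_iff_mem v S).2 hvS)) ?_).symm
      rw [Submodule.finrank_sup_span_singleton hvT, hS]
  have hcount := ncard_mul_pow_sub_one hTM hM (fun S hS ↦ hS) hunique
  rw [pow_one, mul_one, ← gaussBinom_one_mul_sub_one hq] at hcount
  exact mul_right_cancel₀ (sub_ne_zero.2 (by exact_mod_cast hq.ne')) hcount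

end Subspaces

section Isotropic

variable {f : V →ₗ[K] V →ₗ[K] K} {A S S' M T : Submodule K V} {a m n t ν : ℕ}

lemma TotallyIsotropic.mono (hM : TotallyIsotropic f M) (hSM : S ≤ M) : TotallyIsotropic f S :=
  fun x hx y hy ↦ hM x (hSM hx) y (hSM hy)

lemma TotallyIsotropic.le_orthogonal (hM : TotallyIsotropic f M) (hSM : S ≤ M) :
    M ≤ LinearMap.BilinForm.orthogonal f S :=
  fun y hy x hx ↦ hM x (hSM hx) y hy

lemma TotallyIsotropic.sup_span_singleton (hf : f.IsAlt) (hA : TotallyIsotropic f A) {v : V}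
    (hv : v ∈ LinearMap.BilinForm.orthogonal f A) : TotallyIsotropic f (A ⊔ K ∙ v) := by
  have hAv : ∀ x ∈ A, f x v = 0 := hv
  have hvA : ∀ x ∈ A, f v x = 0 := fun x hx ↦ hf.isRefl _ _ (hAv x hx)
  intro _ hxv _ hyv
  obtain ⟨x, hx, _, hr, rfl⟩ := Submodule.mem_sup.1 hxv
  obtain ⟨y, hy, _, hs, rfl⟩ := Submodule.mem_sup.1 hyv
  obtain ⟨r, rfl⟩ := Submodule.mem_span_singleton.1 hr
  obtain ⟨s, rfl⟩ := Submodule.mem_span_singleton.1 hs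
  simp [hf v, hA x hx y hy, hAv x hx, hvA y hy]

lemma C3_sup (f : V →ₗ[K] V →ₗ[K] K) (S S' : Submodule K V) (m : ℕ) :
    C3 f (S ⊔ S') m = C3 f S m ∩ C3 f S' m := by
  ext F
  simp only [C3, sup_le_iff, Set.mem_inter_iff, Set.mem_ofPred_eq]
  tauto

lemma C3_sup_span_singleton (f : V →ₗ[K] V →ₗ[K] K) (A : Submodule K V) (v : V) (m : ℕ) :
    C3 f (A ⊔ K ∙ v) m = {F ∈ C3 f A m | v ∈ F} := by
  ext F
  simp only [C3, sup_le_iff, Submodule.span_singleton_le_iff_mem, Set.mem_ofPred_eq, and_assoc]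

lemma C3_eq_singleton [FiniteDimensional K V] (hA : A ∈ polar f m) : C3 f A m = {A} :=
  Set.eq_singleton_iff_unique_mem.2 ⟨⟨hA, le_rfl⟩, fun _ hF ↦
    (Submodule.eq_of_le_of_finrank_eq hF.2 (hA.2.trans hF.1.2.symm)).symm⟩

lemma C3_eq_empty [FiniteDimensional K V] (hA : m < finrank K A) : C3 f A m = ∅ :=
  Set.eq_empty_of_forall_notMem fun _ hF ↦
    hA.not_ge (hF.1.2 ▸ Submodule.finrank_mono hF.2)

lemma C3_subset_C2 (f : V →ₗ[K] V →ₗ[K] K) (M T : Submodule K V) (m : ℕ) :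
    C3 f T m ⊆ C2 f M T m :=
  Set.subset_union_left

lemma biUnion_C3_subset_C1 [FiniteDimensional K V] (f : V →ₗ[K] V →ₗ[K] K)
    (M T : Submodule K V) (m : ℕ) :
    ⋃ S ∈ coversIn T M, C3 f S m ⊆ C1 f M T m (finrank K T) := by
  refine Set.iUnion₂_subset fun S hS F hF ↦ ⟨hF.1, hS.1.trans hF.2, ?_⟩
  exact hS.2.2 ▸ Submodule.finrank_mono (le_inf hF.2 hS.2.1)

variable [Finite K] [Finite V]

theorem ncard_C3 (hf : f.IsAlt) (hnd : f.Nondegenerate) (hV : finrank K V = 2 * ν) (hmν : m ≤ ν)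
    (ham : a ≤ m) (hA : A ∈ polar f a) :
    ((C3 f A m).ncard : ℚ) = Nprime (Nat.card K) a m ν := by
  have hq : 1 < Nat.card K := Finite.one_lt_card
  induction ham using Nat.decreasingInduction generalizing A with
  | self => rw [C3_eq_singleton hA, Set.ncard_singleton, Nprime_self, Nat.cast_one]
  | of_succ a ham ih =>
    have hthrough : ∀ v ∈ LinearMap.BilinForm.orthogonal f A, v ∉ A →
        ({F ∈ C3 f A m | v ∈ F}.ncard : ℚ) = Nprime (Nat.card K) (a + 1) m ν := by
      intro v hv hvA
      rw [← C3_sup_span_singleton]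
      exact ih ⟨hA.1.sup_span_singleton hf hv,
        by rw [Submodule.finrank_sup_span_singleton hvA, hA.2]⟩
    have horth : finrank K (LinearMap.BilinForm.orthogonal f A) =
        finrank K A + 2 * (ν - a) := by
      rw [LinearMap.BilinForm.finrank_orthogonal hnd, hV, hA.2]
      omega
    have hcount := ncard_mul_pow_sub_one (hA.1.le_orthogonal le_rfl) (d := m - a) horth
      (fun F hF ↦ ⟨hF.2, hF.1.1.le_orthogonal hF.2, by rw [hF.1.2, hA.2]; omega⟩) hthrough
    rw [mul_comm _ (Nprime _ _ _ _), ← Nprime_mul_pow_sub_one hq ham hmν] at hcount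
    have hpow : (1 : ℚ) < (Nat.card K : ℚ) ^ (m - a) :=
      one_lt_pow₀ (by exact_mod_cast hq) (Nat.sub_ne_zero_of_lt ham)
    exact mul_right_cancel₀ (sub_pos.2 hpow).ne' hcount

-- In product form because at `a = m` no `F` exists, while `Nprime q (m + 1) m ν` is the empty
-- product `1`.
lemma ncard_C3_mul_pow_sub_one (hf : f.IsAlt) (hnd : f.Nondegenerate)
    (hV : finrank K V = 2 * ν) (hmν : m ≤ ν) (ham : a ≤ m) (hA : A ∈ polar f (a + 1)) :
    ((C3 f A m).ncard : ℚ) * ((Nat.card K : ℚ) ^ (2 * (ν - a)) - 1) =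
      Nprime (Nat.card K) a m ν * ((Nat.card K : ℚ) ^ (m - a) - 1) := by
  obtain rfl | ham := ham.eq_or_lt
  · simp [C3_eq_empty (f := f) (m := a) (by rw [hA.2]; exact a.lt_succ_self)]
  · rw [ncard_C3 hf hnd hV hmν ham hA, Nprime_mul_pow_sub_one Finite.one_lt_card ham hmν]

lemma pairwise_coversIn_ncard_C3_inter_le (hf : f.IsAlt) (hnd : f.Nondegenerate)
    (hV : finrank K V = 2 * ν) (hmν : m ≤ ν) (htm : t + 1 ≤ m) (htν : t + 1 < ν)
    (hM : TotallyIsotropic f M) (hT : finrank K T = t) :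
    (coversIn T M).Pairwise fun S S' ↦ ((C3 f S m ∩ C3 f S' m).ncard : ℚ) ≤
      Nprime (Nat.card K) (t + 1) m ν * (((Nat.card K : ℚ) ^ (m - (t + 1)) - 1) /
        ((Nat.card K : ℚ) ^ (2 * (ν - (t + 1))) - 1)) := by
  rintro S ⟨hTS, hSM, hS⟩ S' ⟨hTS', hSM', hS'⟩ hne
  have hsup : S ⊔ S' ∈ polar f (t + 1 + 1) :=
    ⟨hM.mono (sup_le hSM hSM'), by rw [finrank_sup_of_ne hTS hTS' hS hS' hne, hT]⟩
  have hpow : (1 : ℚ) < (Nat.card K : ℚ) ^ (2 * (ν - (t + 1))) :=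
    one_lt_pow₀ (by exact_mod_cast Finite.one_lt_card (α := K)) (by omega)
  rw [← C3_sup, mul_div_assoc', ← ncard_C3_mul_pow_sub_one hf hnd hV hmν htm hsup,
    mul_div_cancel_right₀ _ (sub_pos.2 hpow).ne']

theorem lt_ncard_C1 (hf : f.IsAlt) (hnd : f.Nondegenerate) (hV : finrank K V = 2 * ν)
    (hmν : m ≤ ν) (htm : t + 1 ≤ m) (hdim : 2 * n + m + t + 2 ≤ 2 * ν)
    (hM : M ∈ polar f (t + n)) (hTM : T ≤ M) (hT : finrank K T = t) :
    (gaussBinom (Nat.card K) n 1 - (Nat.card K : ℚ) ^ (-2 : ℤ)) *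
      Nprime (Nat.card K) (t + 1) m ν < ((C1 f M T m t).ncard : ℚ) := by
  have hq : 1 < Nat.card K := Finite.one_lt_card
  have hpairs := pairwise_coversIn_ncard_C3_inter_le hf hnd hV hmν htm (by omega) hM.1 hT
  have hsingle : ∀ S ∈ coversIn T M,
      Nprime (Nat.card K) (t + 1) m ν ≤ ((C3 f S m).ncard : ℚ) := fun S hS ↦
    (ncard_C3 hf hnd hV hmν htm ⟨hM.1.mono hS.2.1, by rw [hS.2.2, hT]⟩).ge
  have hbonferroni := bonferroni_le_ncard_biUnion (Set.toFinite _) _ hsingle hpairs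
  rw [Nat.cast_choose_two, ncard_coversIn hTM (by rw [hM.2, hT])] at hbonferroni
  have hsub : ((⋃ S ∈ coversIn T M, C3 f S m).ncard : ℚ) ≤ (C1 f M T m t).ncard := by
    exact_mod_cast Set.ncard_le_ncard (hT ▸ biUnion_C3_subset_C1 f M T m)
  have hcorrection := gaussBinom_one_mul_div_two_lt hq
    (show 2 * n + (m - (t + 1)) + 1 ≤ 2 * (ν - (t + 1)) by omega)
  refine lt_of_lt_of_le ?_ (hbonferroni.trans hsub)
  rw [sub_mul, sub_lt_sub_iff_left, mul_left_comm, mul_comm (_ ^ (-2 : ℤ))]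
  exact mul_lt_mul_of_pos_left hcorrection (Nprime_pos hq (t + 1) hmν)

end Isotropic

theorem stmt_14_general [Finite K] [Finite V] {f : V →ₗ[K] V →ₗ[K] K} {ν m₁ m₂ t : ℕ}
    (hf : f.IsAlt) (hnd : f.Nondegenerate) (hV : finrank K V = 2 * ν)
    (hm₁ : t + 1 ≤ m₁) (hm₂ : t ≤ m₂) (hm₁ν : m₁ ≤ ν) (hdim : m₁ + 2 * m₂ + 4 ≤ 2 * ν + t)
    {M T : Submodule K V} (hM : M ∈ polar f (m₂ + 1)) (hTM : T ≤ M) (hT : finrank K T = t) :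
    (gaussBinom (Nat.card K) (m₂ - t + 1) 1 - (Nat.card K : ℚ) ^ (-2 : ℤ)) *
        Nprime (Nat.card K) (t + 1) m₁ ν * Nprime (Nat.card K) t m₂ ν <
      ((C1 f M T m₁ t).ncard : ℚ) * (C2 f M T m₂).ncard := by
  have hm₂ν : m₂ ≤ ν := by omega
  have hC1 := lt_ncard_C1 hf hnd hV hm₁ν hm₁ (n := m₂ - t + 1) (by omega)
    (by rwa [show t + (m₂ - t + 1) = m₂ + 1 by omega]) hTM hT
  have hC2 : Nprime (Nat.card K) t m₂ ν ≤ (C2 f M T m₂).ncard := by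
    rw [← ncard_C3 hf hnd hV hm₂ν hm₂ ⟨hM.1.mono hTM, hT⟩]
    exact_mod_cast Set.ncard_le_ncard (C3_subset_C2 f M T m₂)
  calc _ < ((C1 f M T m₁ t).ncard : ℚ) * Nprime (Nat.card K) t m₂ ν :=
        mul_lt_mul_of_pos_right hC1 (Nprime_pos Finite.one_lt_card t hm₂ν)
    _ ≤ _ := mul_le_mul_of_nonneg_left hC2 (Nat.cast_nonneg _)

theorem stmt_14
    (q ν m₁ m₂ t : ℕ) (hq : IsPrimePow q)
    {K : Type} [Field K] [Fintype K] (hK : Fintype.card K = q)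
    (f : (Fin (2 * ν) → K) →ₗ[K] (Fin (2 * ν) → K) →ₗ[K] K)
    (halt : ∀ v, f v v = 0)
    (hnd : ∀ v, (∀ w, f v w = 0) → v = 0)
    (ht : 0 < t) (hm₁ : t + 1 ≤ m₁) (hm₂ : t + 1 ≤ m₂) (hm₁ν : m₁ < ν) (hm₂ν : m₂ < ν)
    (hdim : m₁ + 2 * m₂ + 4 ≤ 2 * ν + t)
    (M : Submodule K (Fin (2 * ν) → K)) (hM : M ∈ polar f (m₂ + 1))
    (T : Submodule K (Fin (2 * ν) → K)) (hTM : T ≤ M) (hT : finrank K T = t) :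
    (gaussBinom q (m₂ - t + 1) 1 - (q : ℚ) ^ (-2 : ℤ)) *
        Nprime q (t + 1) m₁ ν * Nprime q t m₂ ν <
      ((C1 f M T m₁ t).ncard : ℚ) * (C2 f M T m₂).ncard := by
  obtain rfl : Nat.card K = q := Nat.card_eq_fintype_card.trans hK
  exact stmt_14_general halt (LinearMap.IsAlt.isRefl halt |>.nondegenerate_iff_separatingLeft.2 hnd)
    (by simp) hm₁ (by omega) hm₁ν.le hdim hM hTM hT

end
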